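/- arXiv:1902.00586 — 4 statements merged into one kernel-verified Lean document; each statement's English description precedes it below -/
import Mathlib

section
/- Let h₀, g, μ be positive real numbers and let λ ∈ ℂ with Re λ > 0. Set θ = √(λ(λ+2μ))/√(h₀g) (principal complex square roots) and define, for ζ ∈ [0,1], z₁(ζ) = (1/(gθ))·(((cosh θ − 1)/sinh θ)·cosh(θζ) − sinh(θζ)) and z₂(ζ) = (λ/(g·h₀·θ²))·(cosh(θζ) − 1 − ((cosh θ − 1)/sinh θ)·sinh(θζ)). Then θ ≠ 0, sinh θ ≠ 0, z₂(0) = z₂(1) = 0, and for every ζ ∈ [0,1]: λ·z₁(ζ) + h₀·z₂′(ζ) = 0 and λ·z₂(ζ) + g·z₁′(ζ) + 2μ·z₂(ζ) = −1 (derivatives taken with respect to ζ). -/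
/-!
Write `K = (cosh θ - 1) / sinh θ`, `φ ζ = cosh (θζ) - 1 - K sinh (θζ)` and
`ψ ζ = K cosh (θζ) - sinh (θζ)`. Then `φ' = -θψ` and `ψ' = -θ(1 + φ)`, and `K` is chosen so that `φ`
vanishes at both endpoints. The components of the solution are multiples of `ψ` and `φ`, and they
satisfy the resolvent equation as soon as `θ² h₀ g = λ(λ + 2μ)`. The division by `sinh θ` is
legitimate unless `θ = kπi` for an integer `k`, in which case `λ(λ + 2μ) = -(kπ)² h₀ g`. This is
impossible when `Re λ > 0` and `μ > 0`: a product of two numbers with positive real part is never a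
nonpositive real number.
-/

open Complex
open scoped Real

lemma mul_mem_slitPlane_of_re_pos {z w : ℂ} (hz : 0 < z.re) (hw : 0 < w.re) :
    z * w ∈ slitPlane := by
  rw [mem_slitPlane_iff, or_iff_not_imp_right, not_not]
  intro him
  have hre : z.re * (z * w).re = (z.re ^ 2 + z.im ^ 2) * w.re := by
    rw [mul_im] at him
    rw [mul_re]
    linear_combination -z.im * him
  have hpos : 0 < z.re * (z * w).re := by
    rw [hre]
    positivity
  exact pos_of_mul_pos_right hpos hz.le

lemma mul_ne_neg_sq_mul_of_re_pos {z w : ℂ} (hz : 0 < z.re) (hw : 0 < w.re) {c : ℝ} (hc : 0 ≤ c)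
    (x : ℝ) : z * w ≠ (-x ^ 2 * c : ℝ) := by
  intro h
  have hpos : 0 < -x ^ 2 * c := ofReal_mem_slitPlane.mp (h ▸ mul_mem_slitPlane_of_re_pos hz hw)
  nlinarith [mul_nonneg (sq_nonneg x) hc]

lemma sq_cpow_half_div_sqrt_mul {a : ℝ} (ha : 0 < a) (w : ℂ) :
    (w ^ ((1 : ℂ) / 2) / (√a : ℝ)) ^ 2 * a = w := by
  have hsqrt : ((√a : ℝ) : ℂ) ^ 2 = a := mod_cast Real.sq_sqrt ha.le
  have hcpow : (w ^ ((1 : ℂ) / 2)) ^ 2 = w := by simp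
  rw [div_pow, hsqrt, hcpow, div_mul_cancel₀ _ (mod_cast ha.ne')]

lemma csinh_eq_zero_iff {z : ℂ} : sinh z = 0 ↔ ∃ k : ℤ, z = k * π * I := by
  have hsin : sinh z = sin (z / I) * I := by rw [← sinh_mul_I, div_mul_cancel₀ _ I_ne_zero]
  simp only [hsin, mul_eq_zero_iff_right I_ne_zero, sin_eq_zero_iff, div_eq_iff I_ne_zero]

lemma csinh_ne_zero_of_forall_sq_ne {z : ℂ} (hz : ∀ k : ℤ, z ^ 2 ≠ -(k * π) ^ 2) :
    sinh z ≠ 0 := by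
  intro h
  obtain ⟨k, hk⟩ := csinh_eq_zero_iff.mp h
  exact hz k (by rw [hk, mul_pow, I_sq, mul_neg_one])

namespace SaintVenant

/-- The shape `φ` of the velocity component of the resolvent solution, before scaling: the solution
of `φ'' = θ² (1 + φ)` on `[0, 1]` with `φ 0 = φ 1 = 0`. -/
noncomputable def velocityProfile (θ : ℂ) (ζ : ℝ) : ℂ :=
  cosh (θ * ζ) - 1 - (cosh θ - 1) / sinh θ * sinh (θ * ζ)

/-- The shape `ψ` of the height component of the resolvent solution, before scaling; it is
normalized so that `φ' = -θ ψ` for the velocity profile `φ`. -/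
noncomputable def heightProfile (θ : ℂ) (ζ : ℝ) : ℂ :=
  (cosh θ - 1) / sinh θ * cosh (θ * ζ) - sinh (θ * ζ)

/-- The height component `z₁` of the solution of `(λI − A) z = b`. Here `θ` is a free parameter, to
be tied to `λ` by `θ² h₀ g = λ(λ + 2μ)`. -/
noncomputable def resolventHeight (g θ : ℂ) (ζ : ℝ) : ℂ :=
  1 / (g * θ) * heightProfile θ ζ

/-- The velocity component `z₂` of the solution of `(λI − A) z = b`, with `l` for `λ` and with `θ` a
free parameter as in `resolventHeight`. -/
noncomputable def resolventVelocity (h₀ g l θ : ℂ) (ζ : ℝ) : ℂ :=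
  l / (g * h₀ * θ ^ 2) * velocityProfile θ ζ

lemma velocityProfile_zero (θ : ℂ) : velocityProfile θ 0 = 0 := by
  simp [velocityProfile]

lemma velocityProfile_one {θ : ℂ} (hθ : sinh θ ≠ 0) : velocityProfile θ 1 = 0 := by
  simp [velocityProfile, div_mul_cancel₀ _ hθ]

lemma hasDerivAt_velocityProfile (θ : ℂ) (ζ : ℝ) :
    HasDerivAt (velocityProfile θ) (-θ * heightProfile θ ζ) ζ := by
  have hlin := (hasDerivAt_id (ζ : ℂ)).const_mul θ
  refine ((hlin.ccosh.sub_const 1).fun_sub (hlin.csinh.const_mul _)).comp_ofReal.congr_deriv ?_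
  simp only [heightProfile, id]
  ring

lemma hasDerivAt_heightProfile (θ : ℂ) (ζ : ℝ) :
    HasDerivAt (heightProfile θ) (-θ * (1 + velocityProfile θ ζ)) ζ := by
  have hlin := (hasDerivAt_id (ζ : ℂ)).const_mul θ
  refine ((hlin.ccosh.const_mul _).fun_sub hlin.csinh).comp_ofReal.congr_deriv ?_
  simp only [velocityProfile, id]
  ring

lemma hasDerivAt_resolventVelocity (h₀ g l θ : ℂ) (ζ : ℝ) :
    HasDerivAt (resolventVelocity h₀ g l θ) (-(l * resolventHeight g θ ζ) / h₀) ζ := by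
  refine ((hasDerivAt_velocityProfile θ ζ).const_mul _).congr_deriv ?_
  simp only [resolventHeight]
  field_simp

lemma hasDerivAt_resolventHeight (g : ℂ) {θ : ℂ} (hθ : θ ≠ 0) (ζ : ℝ) :
    HasDerivAt (resolventHeight g θ) (-(1 + velocityProfile θ ζ) / g) ζ := by
  refine ((hasDerivAt_heightProfile θ ζ).const_mul _).congr_deriv ?_
  field_simp

lemma add_two_mul_mul_resolventVelocity {h₀ g μ l θ : ℂ} (hθ : θ ^ 2 * (h₀ * g) = l * (l + 2 * μ))
    (hl : l * (l + 2 * μ) ≠ 0) (ζ : ℝ) :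
    (l + 2 * μ) * resolventVelocity h₀ g l θ ζ = velocityProfile θ ζ := by
  have hscale : g * h₀ * θ ^ 2 = l * (l + 2 * μ) := by rw [← hθ]; ring
  rw [resolventVelocity, hscale, ← mul_assoc, mul_div_assoc', mul_comm _ l, div_self hl, one_mul]

lemma mul_add_two_mul_ne_neg_sq_mul_of_re_pos {h₀ g μ : ℝ} (hh₀ : 0 ≤ h₀) (hg : 0 ≤ g)
    (hμ : 0 ≤ μ) {l : ℂ} (hl : 0 < l.re) (k : ℤ) :
    l * (l + 2 * μ) ≠ -(k * π) ^ 2 * (h₀ * g) := by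
  have hre : 0 < (l + 2 * (μ : ℂ)).re := by simpa using by positivity
  exact mod_cast mul_ne_neg_sq_mul_of_re_pos hl hre (mul_nonneg hh₀ hg) (k * π)

end SaintVenant

open SaintVenant

/-- The roots `λ` of the equations `λ(λ + 2μ) = -(kπ)² h₀ g`, `k : ℤ`, are the eigenvalues of `A`,
together with `λ = -2μ`, where `θ = 0` and the formulas for `z₁`, `z₂` break down. -/
theorem stmt1_general {h₀ g μ l θ : ℂ} (hθ : θ ^ 2 * (h₀ * g) = l * (l + 2 * μ))
    (hl : ∀ k : ℤ, l * (l + 2 * μ) ≠ -(k * π) ^ 2 * (h₀ * g)) :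
    θ ≠ 0 ∧ sinh θ ≠ 0 ∧ resolventVelocity h₀ g l θ 0 = 0 ∧ resolventVelocity h₀ g l θ 1 = 0 ∧
      ∀ ζ : ℝ,
        l * resolventHeight g θ ζ + h₀ * deriv (resolventVelocity h₀ g l θ) ζ = 0 ∧
        l * resolventVelocity h₀ g l θ ζ + g * deriv (resolventHeight g θ) ζ
          + 2 * μ * resolventVelocity h₀ g l θ ζ = -1 := by
  have hl₀ : l * (l + 2 * μ) ≠ 0 := by simpa using hl 0
  obtain ⟨hθ₀, hh₀, hg⟩ : θ ≠ 0 ∧ h₀ ≠ 0 ∧ g ≠ 0 := by simpa [← hθ] using hl₀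
  have hsinh : sinh θ ≠ 0 :=
    csinh_ne_zero_of_forall_sq_ne fun k hk ↦ hl k (by rw [← hθ, hk])
  refine ⟨hθ₀, hsinh, ?_, ?_, fun ζ ↦ ⟨?_, ?_⟩⟩
  · rw [resolventVelocity, velocityProfile_zero, mul_zero]
  · rw [resolventVelocity, velocityProfile_one hsinh, mul_zero]
  · rw [(hasDerivAt_resolventVelocity h₀ g l θ ζ).deriv, mul_div_cancel₀ _ hh₀, add_neg_cancel]
  · rw [(hasDerivAt_resolventHeight g hθ₀ ζ).deriv, mul_div_cancel₀ _ hg]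
    linear_combination add_two_mul_mul_resolventVelocity hθ hl₀ ζ

/-- Explicit solution of the resolvent equation `(λI − A)z = b` for the generator of the
linearized Saint-Venant system, `A(z₁,z₂) = (−h₀ z₂', −g z₁' − 2μ z₂)`, `b = (0,−1)ᵀ`. -/
theorem stmt1 (h₀ g μ : ℝ) (hh₀ : 0 < h₀) (hg : 0 < g) (hμ : 0 < μ)
    (l : ℂ) (hl : 0 < l.re)
    (θ : ℂ) (hθ : θ = (l * (l + 2 * (μ:ℂ))) ^ ((1:ℂ)/2) / ((Real.sqrt (h₀ * g) : ℝ) : ℂ))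
    (z₁ z₂ : ℝ → ℂ)
    (hz₁ : z₁ = fun ζ : ℝ ↦ (1 / ((g:ℂ) * θ)) *
      (((Complex.cosh θ - 1) / Complex.sinh θ) * Complex.cosh (θ * ζ)
        - Complex.sinh (θ * ζ)))
    (hz₂ : z₂ = fun ζ : ℝ ↦ ((l / ((g:ℂ) * (h₀:ℂ) * θ ^ 2))) *
      (Complex.cosh (θ * ζ) - 1
        - ((Complex.cosh θ - 1) / Complex.sinh θ) * Complex.sinh (θ * ζ))) :
    θ ≠ 0 ∧ Complex.sinh θ ≠ 0 ∧ z₂ 0 = 0 ∧ z₂ 1 = 0 ∧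
      ∀ ζ ∈ Set.Icc (0:ℝ) 1,
        l * z₁ ζ + (h₀:ℂ) * deriv z₂ ζ = 0 ∧
        l * z₂ ζ + (g:ℂ) * deriv z₁ ζ + 2 * (μ:ℂ) * z₂ ζ = -1 := by
  have hsq : θ ^ 2 * ((h₀ : ℂ) * g) = l * (l + 2 * (μ : ℂ)) := by
    rw [hθ, ← ofReal_mul, sq_cpow_half_div_sqrt_mul (mul_pos hh₀ hg)]
  obtain ⟨hθ₀, hsinh, hzero, hone, hode⟩ :=
    stmt1_general hsq (mul_add_two_mul_ne_neg_sq_mul_of_re_pos hh₀.le hg.le hμ.le hl)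
  subst hz₁ hz₂
  exact ⟨hθ₀, hsinh, hzero, hone, fun ζ _ ↦ hode ζ⟩
end

section
/- Let h₀, g, μ be positive real numbers and let λ ∈ ℂ with Re λ > 0. Set θ = √(λ(λ+2μ))/√(h₀g) (principal complex square roots) and define, for ζ ∈ [0,1], z₁(ζ) = (1/(gθ))·(((cosh θ − 1)/sinh θ)·cosh(θζ) − sinh(θζ)). Then sinh θ ≠ 0, z₁(1) + z₁(0) = 0, and λ·(z₁(1) − z₁(0)) = −√(4h₀λ/(g(λ+2μ)))·tanh(θ/2), where the square root is the principal complex square root. -/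
/-!
Write `m = l + 2μ` and `√w = w ^ (1/2)`. When `|arg l| + |arg m| < π`, the principal square roots
of `l * m` and `l / m` split as `√l * √m` and `√l / √m`, so `l / √(l * m) = √(l / m)`. The same
condition keeps `l * m` off the cut, so that `0 < Re θ` and `sinh θ ≠ 0`. Half-angle formulas turn
the resolvent solution into `sinh (θ / 2 - θ ζ) / (g θ cosh (θ / 2))`, which is odd about `ζ = 1/2`
and has the boundary values `± tanh (θ / 2) / (g θ)`.
-/

section

open Complex Set
open scoped Real

section HyperbolicFunctions

variable {z : ℂ}

lemma sinh_ne_zero_of_re_ne_zero (hz : z.re ≠ 0) : sinh z ≠ 0 := by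
  intro h
  have hexp : cexp z = cexp (-z) := by
    rw [sinh, div_eq_zero_iff, sub_eq_zero] at h
    exact h.resolve_right two_ne_zero
  have hre : z.re = -z.re := by
    simpa only [norm_exp, Real.exp_eq_exp, neg_re] using congrArg norm hexp
  exact hz (self_eq_neg.mp hre)

lemma cosh_ne_zero_of_re_ne_zero (hz : z.re ≠ 0) : cosh z ≠ 0 := by
  have h : sinh (2 * z) ≠ 0 := sinh_ne_zero_of_re_ne_zero (by simpa using hz)
  rw [sinh_two_mul] at h
  exact right_ne_zero_of_mul h

-- At a zero of `sinh`, the numerator `cosh z - 1` or the denominator of `tanh (z / 2)` vanishes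
-- too, and the convention `x / 0 = 0` makes both sides zero.
lemma tanh_half_eq_cosh_sub_one_div_sinh (z : ℂ) : tanh (z / 2) = (cosh z - 1) / sinh z := by
  obtain ⟨w, rfl⟩ : ∃ w, z = 2 * w := ⟨z / 2, by ring⟩
  have hcosh : cosh (2 * w) - 1 = 2 * sinh w * sinh w := by
    rw [cosh_two_mul, cosh_sq]
    ring
  rw [mul_div_cancel_left₀ w two_ne_zero, hcosh, sinh_two_mul, tanh_eq_sinh_div_cosh]
  obtain hs | hs := eq_or_ne (sinh w) 0
  · simp [hs]
  · rw [mul_div_mul_left _ _ (mul_ne_zero two_ne_zero hs)]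

lemma tanh_mul_cosh_sub_sinh (hz : cosh z ≠ 0) (w : ℂ) :
    tanh z * cosh w - sinh w = sinh (z - w) / cosh z := by
  rw [tanh_eq_sinh_div_cosh, sinh_sub]
  field_simp

lemma cosh_sub_one_div_sinh_mul_cosh_sub_sinh (hz : z.re ≠ 0) (w : ℂ) :
    (cosh z - 1) / sinh z * cosh w - sinh w = sinh (z / 2 - w) / cosh (z / 2) := by
  have hcosh : cosh (z / 2) ≠ 0 := cosh_ne_zero_of_re_ne_zero (by simpa using hz)
  rw [← tanh_half_eq_cosh_sub_one_div_sinh, tanh_mul_cosh_sub_sinh hcosh]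

end HyperbolicFunctions

section PrincipalPowers

variable {x y : ℂ}

lemma mul_cpow_of_arg_add_mem_Ioc (h : arg x + arg y ∈ Ioc (-π) π) (s : ℂ) :
    (x * y) ^ s = x ^ s * y ^ s := by
  obtain rfl | hs := eq_or_ne s 0
  · simp only [cpow_zero, mul_one]
  obtain rfl | hx := eq_or_ne x 0
  · simp only [zero_mul, zero_cpow hs]
  obtain rfl | hy := eq_or_ne y 0
  · simp only [mul_zero, zero_cpow hs]
  rw [cpow_def_of_ne_zero (mul_ne_zero hx hy), cpow_def_of_ne_zero hx, cpow_def_of_ne_zero hy,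
    (log_mul_eq_add_log_iff hx hy).mpr h, add_mul, exp_add]

lemma sq_mul_cpow_inv_two {r : ℝ} (hr : 0 ≤ r) (x : ℂ) :
    ((r : ℂ) ^ 2 * x) ^ (2⁻¹ : ℂ) = r * x ^ (2⁻¹ : ℂ) := by
  obtain rfl | hr := hr.eq_or_lt
  · simp
  have harg : arg ((r : ℂ) ^ 2) = 0 := by
    rw [← ofReal_pow, arg_ofReal_of_nonneg (sq_nonneg r)]
  rw [mul_cpow_of_arg_add_mem_Ioc (by simpa only [harg, zero_add] using arg_mem_Ioc x),
    sq_cpow_two_inv (by simpa only [ofReal_re] using hr)]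

lemma cpow_inv_two_re_pos (hx : x ∈ slitPlane) : 0 < (x ^ (2⁻¹ : ℂ)).re := by
  rw [cpow_inv_two_re]
  refine Real.sqrt_pos.mpr (half_pos ?_)
  obtain hre | him := mem_slitPlane_iff.mp hx
  · positivity
  · linarith [neg_lt_of_abs_lt (abs_re_lt_norm.mpr him)]

lemma mul_mem_slitPlane_of_arg_add_mem_Ioo (hx : x ≠ 0) (hy : y ≠ 0)
    (h : arg x + arg y ∈ Ioo (-π) π) : x * y ∈ slitPlane := by
  refine mem_slitPlane_iff_arg.mpr ⟨?_, mul_ne_zero hx hy⟩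
  rw [(arg_mul_eq_add_arg_iff hx hy).mpr (Ioo_subset_Ioc_self h)]
  exact h.2.ne

lemma arg_add_mem_Ioo_of_abs_arg (h : |arg x| + |arg y| < π) : arg x + arg y ∈ Ioo (-π) π :=
  abs_lt.mp ((abs_add_le _ _).trans_lt h)

lemma div_mul_cpow_inv_two_eq_div_cpow_inv_two (h : |arg x| + |arg y| < π) :
    x / (x * y) ^ (2⁻¹ : ℂ) = (x / y) ^ (2⁻¹ : ℂ) := by
  have harg_y : arg y ≠ π := fun hy ↦ by linarith [abs_nonneg (arg x), le_abs_self (arg y)]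
  have h_inv : |arg x| + |arg y⁻¹| < π := by rwa [abs_arg_inv]
  calc x / (x * y) ^ (2⁻¹ : ℂ)
      = (x ^ (2⁻¹ : ℂ)) ^ 2 / (x ^ (2⁻¹ : ℂ) * y ^ (2⁻¹ : ℂ)) := by
        rw [cpow_ofNat_inv_pow,
          mul_cpow_of_arg_add_mem_Ioc (Ioo_subset_Ioc_self (arg_add_mem_Ioo_of_abs_arg h))]
    _ = x ^ (2⁻¹ : ℂ) * (y ^ (2⁻¹ : ℂ))⁻¹ := by
        obtain hx | hx := eq_or_ne (x ^ (2⁻¹ : ℂ)) 0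
        · simp [hx]
        · rw [sq, mul_div_mul_left _ _ hx, div_eq_mul_inv]
    _ = (x / y) ^ (2⁻¹ : ℂ) := by
        rw [← inv_cpow _ _ harg_y, div_eq_mul_inv,
          mul_cpow_of_arg_add_mem_Ioc (Ioo_subset_Ioc_self (arg_add_mem_Ioo_of_abs_arg h_inv))]

lemma abs_arg_add_abs_arg_lt_pi_of_re_pos (hx : 0 < x.re) (hy : 0 < y.re) :
    |arg x| + |arg y| < π := by
  linarith [abs_arg_lt_pi_div_two_iff.mpr (.inl hx), abs_arg_lt_pi_div_two_iff.mpr (.inl hy)]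

end PrincipalPowers

section WaterTank

/-- The complex wavenumber `θ` of the resolvent equation at the frequency `l`, with the damped
frequency `l + 2μ` passed as the second factor `m`. -/
noncomputable def wavenumber (h₀ g : ℝ) (l m : ℂ) : ℂ :=
  (l * m) ^ (2⁻¹ : ℂ) / (√(h₀ * g) : ℂ)

variable {h₀ g : ℝ} {l m : ℂ}

lemma re_wavenumber_pos (hr : 0 < h₀ * g) (hl : l ≠ 0) (hm : m ≠ 0)
    (harg : |arg l| + |arg m| < π) : 0 < (wavenumber h₀ g l m).re := by
  rw [wavenumber, div_ofReal_re]
  exact div_pos (cpow_inv_two_re_pos <|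
    mul_mem_slitPlane_of_arg_add_mem_Ioo hl hm (arg_add_mem_Ioo_of_abs_arg harg))
    (Real.sqrt_pos.mpr hr)

lemma cpow_inv_two_eq_two_mul_div_wavenumber (hh₀ : 0 < h₀) (hg : 0 < g)
    (harg : |arg l| + |arg m| < π) :
    (4 * h₀ * l / (g * m)) ^ (2⁻¹ : ℂ) = 2 * l / (g * wavenumber h₀ g l m) := by
  have hsq : (√(h₀ * g) : ℂ) ^ 2 = h₀ * g := by
    exact_mod_cast Real.sq_sqrt (mul_pos hh₀ hg |>.le)
  calc (4 * h₀ * l / (g * m)) ^ (2⁻¹ : ℂ)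
      = (((2 * √(h₀ * g) / g : ℝ) : ℂ) ^ 2 * (l / m)) ^ (2⁻¹ : ℂ) := by
        push_cast
        rw [div_pow, mul_pow, hsq]
        congr 1
        field_simp
        ring
    _ = ((2 * √(h₀ * g) / g : ℝ) : ℂ) * (l / (l * m) ^ (2⁻¹ : ℂ)) := by
        rw [sq_mul_cpow_inv_two (by positivity), div_mul_cpow_inv_two_eq_div_cpow_inv_two harg]
    _ = 2 * l / (g * wavenumber h₀ g l m) := by
        rw [wavenumber]
        push_cast
        field_simp

end WaterTank

end

-- For real `μ > 0` the conditions on `l` say that `-μ < Re l` and `l ∉ (-μ, 0]`, so the formula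
-- continues the transfer function beyond the right half-plane.
theorem stmt2_general (h₀ g : ℝ) (μ : ℂ) (hh₀ : 0 < h₀) (hg : 0 < g)
    (l : ℂ) (hl : l ≠ 0) (hm : l + 2 * μ ≠ 0)
    (harg : |Complex.arg l| + |Complex.arg (l + 2 * μ)| < Real.pi)
    (θ : ℂ) (hθ : θ = (l * (l + 2 * μ)) ^ ((1 : ℂ) / 2) / ((Real.sqrt (h₀ * g) : ℝ) : ℂ))
    (z₁ : ℝ → ℂ)
    (hz₁ : z₁ = fun ζ : ℝ ↦ (1 / ((g : ℂ) * θ)) *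
      (((Complex.cosh θ - 1) / Complex.sinh θ) * Complex.cosh (θ * ζ)
        - Complex.sinh (θ * ζ))) :
    Complex.sinh θ ≠ 0 ∧ z₁ 1 + z₁ 0 = 0 ∧
      l * (z₁ 1 - z₁ 0)
        = -((4 * (h₀ : ℂ) * l / ((g : ℂ) * (l + 2 * μ))) ^ ((1 : ℂ) / 2))
            * Complex.tanh (θ / 2) := by
  rw [one_div] at hθ ⊢
  replace hθ : θ = wavenumber h₀ g l (l + 2 * μ) := hθ
  have hre : θ.re ≠ 0 := hθ ▸ (re_wavenumber_pos (mul_pos hh₀ hg) hl hm harg).ne'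
  have hz (ζ : ℝ) : z₁ ζ
      = 1 / (g * θ) * (Complex.sinh (θ / 2 - θ * ζ) / Complex.cosh (θ / 2)) := by
    rw [hz₁, ← cosh_sub_one_div_sinh_mul_cosh_sub_sinh hre]
  have hz_zero : z₁ 0 = 1 / (g * θ) * Complex.tanh (θ / 2) := by
    rw [hz, Complex.ofReal_zero, mul_zero, sub_zero, Complex.tanh_eq_sinh_div_cosh]
  have hz_one : z₁ 1 = -z₁ 0 := by
    rw [hz_zero, hz, Complex.ofReal_one, mul_one, show θ / 2 - θ = -(θ / 2) by ring,
      Complex.sinh_neg, neg_div, mul_neg, Complex.tanh_eq_sinh_div_cosh]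
  refine ⟨sinh_ne_zero_of_re_ne_zero hre, by rw [hz_one, neg_add_cancel], ?_⟩
  rw [hz_one, hz_zero, cpow_inv_two_eq_two_mul_div_wavenumber hh₀ hg harg, ← hθ]
  ring

/-- The boundary evaluations of the first component of the resolvent solution:
`z₁(1) + z₁(0) = 0` and `λ(z₁(1) − z₁(0)) = −√(4h₀λ/(g(λ+2μ)))·tanh(θ/2)`,
which identifies the input-output transfer function of the linearized moving water tank. -/
theorem stmt2 (h₀ g μ : ℝ) (hh₀ : 0 < h₀) (hg : 0 < g) (hμ : 0 < μ)
    (l : ℂ) (hl : 0 < l.re)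
    (θ : ℂ) (hθ : θ = (l * (l + 2 * (μ:ℂ))) ^ ((1:ℂ)/2) / ((Real.sqrt (h₀ * g) : ℝ) : ℂ))
    (z₁ : ℝ → ℂ)
    (hz₁ : z₁ = fun ζ : ℝ ↦ (1 / ((g:ℂ) * θ)) *
      (((Complex.cosh θ - 1) / Complex.sinh θ) * Complex.cosh (θ * ζ)
        - Complex.sinh (θ * ζ))) :
    Complex.sinh θ ≠ 0 ∧ z₁ 1 + z₁ 0 = 0 ∧
      l * (z₁ 1 - z₁ 0)
        = -((4 * (h₀:ℂ) * l / ((g:ℂ) * (l + 2 * (μ:ℂ)))) ^ ((1:ℂ)/2))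
            * Complex.tanh (θ / 2) := by
  have hm : 0 < (l + 2 * (μ : ℂ)).re := by simpa using by positivity
  exact stmt2_general h₀ g μ hh₀ hg l (Complex.ne_zero_of_re_pos hl) (Complex.ne_zero_of_re_pos hm)
    (abs_arg_add_abs_arg_lt_pi_of_re_pos hl hm) θ hθ z₁ hz₁
end

section
/- Let z ∈ ℂ with cosh z ≠ 0. Then the family (fun k : ℕ ↦ 8z/(π²(2k+1)² + 4z²)) is summable and tanh z = ∑_{k=0}^{∞} 8z/(π²(2k+1)² + 4z²). -/
open Real

/-!
The partial fractions `π cot (πx) = 1/x + ∑ (1/(x - (n+1)) + 1/(x + (n+1)))` in Mathlib pair the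
poles symmetrically about `0`. Expanding `1/x` as the telescoping series `∑ (1/(x+n) - 1/(x+(n+1)))`
re-pairs them symmetrically about `1/2`: the pole `-n` goes with `n + 1`. At `x = 1/2 - z/π`, each
new pair divided by `π` is a term of the series of `tan z = cot (π/2 - z)`, and
`tanh z = -i tan (iz)`.
-/

section Telescoping

open Filter Topology

lemma hasSum_sub_succ {G : Type*} [AddCommGroup G] [TopologicalSpace G] [IsTopologicalAddGroup G]
    [T2Space G] {f : ℕ → G} {a : G} (hs : Summable fun n ↦ f n - f (n + 1))
    (hf : Tendsto f atTop (𝓝 a)) : HasSum (fun n ↦ f n - f (n + 1)) (f 0 - a) := by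
  rw [hs.hasSum_iff_tendsto_nat]
  simpa only [Finset.sum_range_sub'] using hf.const_sub (f 0)

lemma tendsto_one_div_add_natCast (x : ℂ) : Tendsto (fun n : ℕ ↦ 1 / (x + n)) atTop (𝓝 0) := by
  simp only [one_div]
  exact tendsto_inv₀_cobounded.comp
    ((tendsto_const_add_cobounded x).comp tendsto_natCast_atTop_cobounded)

lemma summable_one_div_sub_one_div_succ {x : ℂ} (hx : ∀ n : ℕ, x + n ≠ 0) :
    Summable fun n : ℕ ↦ 1 / (x + n) - 1 / (x + (n + 1 : ℕ)) := by
  have hprod : Summable fun n : ℕ ↦ ((x + n + 1) * (x + n))⁻¹ := by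
    simpa [Function.comp_def] using
      (EisensteinSeries.summable_linear_right_add_one_mul_linear_right x 1 1).comp_injective
        Nat.cast_injective
  refine hprod.congr fun n ↦ ?_
  have h1 : x + n + 1 ≠ 0 := by simpa [add_assoc] using hx (n + 1)
  push_cast
  rw [← add_assoc]
  field [hx n]

lemma hasSum_one_div_sub_one_div_succ {x : ℂ} (hx : ∀ n : ℕ, x + n ≠ 0) :
    HasSum (fun n : ℕ ↦ 1 / (x + n) - 1 / (x + (n + 1 : ℕ))) (1 / x) := by
  simpa only [Nat.cast_zero, add_zero, sub_zero] using
    hasSum_sub_succ (summable_one_div_sub_one_div_succ hx) (tendsto_one_div_add_natCast x)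

end Telescoping

lemma hasSum_cotTerm {x : ℂ} (hx : x ∈ Complex.integerComplement) :
    HasSum (cotTerm x) (π * Complex.cot (π * x) - 1 / x) :=
  (summable_cotTerm hx).hasSum_iff_tendsto_nat.2 (tendsto_logDeriv_euler_cot_sub hx)

lemma hasSum_pi_mul_cot {x : ℂ} (hx : x ∈ Complex.integerComplement) :
    HasSum (fun n : ℕ ↦ 1 / (x + n) + 1 / (x - (n + 1))) (π * Complex.cot (π * x)) := by
  have htelescope := hasSum_one_div_sub_one_div_succ fun n : ℕ ↦ by
    simpa using Complex.integerComplement_add_ne_zero hx n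
  convert! (hasSum_cotTerm hx).add htelescope using 1
  · ext n
    rw [cotTerm]
    push_cast
    ring
  · ring

lemma cot_pi_div_two_sub (z : ℂ) : Complex.cot (π / 2 - z) = Complex.tan z := by
  rw [Complex.cot, Complex.cos_pi_div_two_sub, Complex.sin_pi_div_two_sub, Complex.tan]

lemma mem_integerComplement_of_sin_pi_mul_ne_zero {x : ℂ} (hx : Complex.sin (π * x) ≠ 0) :
    x ∈ Complex.integerComplement := by
  rintro ⟨n, rfl⟩
  exact hx (by rw [mul_comm, Complex.sin_int_mul_pi])

lemma hasSum_tan {z : ℂ} (hz : Complex.cos z ≠ 0) :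
    HasSum (fun k : ℕ ↦ 8 * z / ((π : ℂ) ^ 2 * (2 * k + 1) ^ 2 - 4 * z ^ 2)) (Complex.tan z) := by
  have hπ : (π : ℂ) ≠ 0 := Complex.ofReal_ne_zero.2 pi_ne_zero
  obtain ⟨x, rfl⟩ : ∃ x : ℂ, z = π / 2 - π * x := ⟨1 / 2 - z / π, by field⟩
  rw [Complex.cos_pi_div_two_sub] at hz
  have hx := mem_integerComplement_of_sin_pi_mul_ne_zero hz
  rw [← cot_pi_div_two_sub, sub_sub_cancel]
  convert! (hasSum_pi_mul_cot hx).mul_left (π : ℂ)⁻¹ using 1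
  · ext k
    have hleft : x + k ≠ 0 := by simpa using Complex.integerComplement_add_ne_zero hx k
    have hright : x - (k + 1) ≠ 0 := by
      simpa [sub_eq_add_neg] using Complex.integerComplement_add_ne_zero hx (-(k + 1))
    have hden : (π : ℂ) ^ 2 * (2 * k + 1) ^ 2 - 4 * (π / 2 - π * x) ^ 2 =
        -4 * π ^ 2 * ((x + k) * (x - (k + 1))) := by ring
    rw [hden]
    field
  · field

lemma hasSum_tanh {z : ℂ} (hz : Complex.cosh z ≠ 0) :
    HasSum (fun k : ℕ ↦ 8 * z / ((π : ℂ) ^ 2 * (2 * k + 1) ^ 2 + 4 * z ^ 2))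
      (Complex.tanh z) := by
  have htan := (hasSum_tan (by rwa [Complex.cos_mul_I])).mul_left (-Complex.I)
  convert! htan using 1
  · ext k
    rw [mul_pow, Complex.I_sq]
    linear_combination (8 * z / ((π : ℂ) ^ 2 * (2 * k + 1) ^ 2 + 4 * z ^ 2)) * Complex.I_sq
  · rw [Complex.tan_mul_I]
    linear_combination Complex.tanh z * Complex.I_sq

/-- Mittag-Leffler partial fraction expansion of the hyperbolic tangent:
`tanh z = ∑_{k≥0} 8z/(π²(2k+1)² + 4z²)` for all `z` with `cosh z ≠ 0`. -/
theorem stmt4 (z : ℂ) (hz : Complex.cosh z ≠ 0) :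
    Summable (fun k : ℕ ↦ 8 * z / (((π:ℂ)) ^ 2 * (2 * (k:ℂ) + 1) ^ 2 + 4 * z ^ 2)) ∧
    Complex.tanh z = ∑' k : ℕ, 8 * z / (((π:ℂ)) ^ 2 * (2 * (k:ℂ) + 1) ^ 2 + 4 * z ^ 2) :=
  ⟨(hasSum_tanh hz).summable, (hasSum_tanh hz).tsum_eq.symm⟩
end

section
/- Let μ, σ be real numbers with σ > μ > 0, let φ = √(σ² − μ²), and let t ≥ 0. Then there exist real numbers α, β, ω with φ ≤ α ≤ σ, φ ≤ β ≤ σ, φ ≤ ω ≤ σ such that cos(φt) − (μ/φ)·sin(φt) = t²·(μ²(α − σ)/(σ + φ))·cos(ωt) + t·(μ³/(φ(σ + φ)))·cos(βt) + (t·(σ − φ) − μ/φ)·sin(σt) + cos(σt). Moreover σ − φ = μ²/(σ + φ), so the coefficient μ²(α − σ)/(σ + φ) lies in the interval [−μ⁴/(σ + φ)², 0]. -/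
/-!
Write `φ` for the damped and `σ` for the undamped frequency. The mean value theorem in the
frequency variable turns `cos (φ * t) - cos (σ * t)` into a multiple of `sin (α * t)` with `α`
between `φ` and `σ`; a second application, between `α` and `σ`, replaces this sine by
`sin (σ * t)` at the cost of a term quadratic in `t`. One application suffices for
`sin (φ * t)`, whose coefficient `μ / φ` is already of order `1 / σ`. Each application contributes
a factor of size at most `σ - φ`, and `(σ - φ) * (σ + φ) = μ ^ 2` makes it of order `1 / σ`.
-/

open Real Set

theorem exists_mem_uIcc_sub_eq_mul_of_hasDerivWithinAt {f f' : ℝ → ℝ} {a b : ℝ}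
    (hf : ∀ x ∈ uIcc a b, HasDerivWithinAt f (f' x) (uIcc a b) x) :
    ∃ c ∈ uIcc a b, f b - f a = f' c * (b - a) := by
  obtain ⟨c, hc, h⟩ := domain_mvt (fun x hx => (hf x hx).hasFDerivWithinAt)
    (convex_uIcc a b) left_mem_uIcc right_mem_uIcc
  refine ⟨c, segment_eq_uIcc a b ▸ hc, h.trans ?_⟩
  simp [mul_comm]

section Harmonics

variable (a b t : ℝ)

theorem exists_mem_uIcc_sin_mul_sub_sin_mul_eq :
    ∃ c ∈ uIcc a b, sin (b * t) - sin (a * t) = cos (c * t) * t * (b - a) :=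
  exists_mem_uIcc_sub_eq_mul_of_hasDerivWithinAt fun _ _ =>
    (hasDerivAt_mul_const t).sin.hasDerivWithinAt

theorem exists_mem_uIcc_cos_mul_sub_cos_mul_eq :
    ∃ c ∈ uIcc a b, cos (b * t) - cos (a * t) = -sin (c * t) * t * (b - a) :=
  exists_mem_uIcc_sub_eq_mul_of_hasDerivWithinAt fun _ _ =>
    (hasDerivAt_mul_const t).cos.hasDerivWithinAt

theorem exists_mem_uIcc_cos_mul_eq_second_order :
    ∃ α ∈ uIcc a b, ∃ ω ∈ uIcc a b,
      cos (a * t) = cos (b * t) + t * (b - a) * sin (b * t)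
        + t ^ 2 * ((b - a) * (α - b)) * cos (ω * t) := by
  obtain ⟨α, hα, hcos⟩ := exists_mem_uIcc_cos_mul_sub_cos_mul_eq a b t
  obtain ⟨ω, hω, hsin⟩ := exists_mem_uIcc_sin_mul_sub_sin_mul_eq α b t
  refine ⟨α, hα, ω, uIcc_subset_uIcc_right hα hω, ?_⟩
  linear_combination -hcos - t * (b - a) * hsin

theorem exists_mem_uIcc_cos_mul_sub_const_mul_sin_eq (k : ℝ) :
    ∃ α ∈ uIcc a b, ∃ β ∈ uIcc a b, ∃ ω ∈ uIcc a b,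
      cos (a * t) - k * sin (a * t)
        = t ^ 2 * ((b - a) * (α - b)) * cos (ω * t) + t * (k * (b - a)) * cos (β * t)
          + (t * (b - a) - k) * sin (b * t) + cos (b * t) := by
  obtain ⟨α, hα, ω, hω, hcos⟩ := exists_mem_uIcc_cos_mul_eq_second_order a b t
  obtain ⟨β, hβ, hsin⟩ := exists_mem_uIcc_sin_mul_sub_sin_mul_eq a b t
  refine ⟨α, hα, β, hβ, ω, hω, ?_⟩
  linear_combination hcos + k * hsin

end Harmonics

theorem sub_eq_sq_div_add_of_sq_eq_sq_sub_sq {K : Type*} [Field K] {x y z : K}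
    (h : y ^ 2 = x ^ 2 - z ^ 2) (hxy : x + y ≠ 0) : x - y = z ^ 2 / (x + y) := by
  rw [eq_div_iff hxy]
  linear_combination -h

theorem sub_mul_sub_mem_Icc_neg_sq {R : Type*} [CommRing R] [LinearOrder R] [IsStrictOrderedRing R]
    {a b x : R} (hx : x ∈ Icc a b) : (b - a) * (x - b) ∈ Icc (-(b - a) ^ 2) 0 := by
  have hab : 0 ≤ b - a := sub_nonneg.2 (hx.1.trans hx.2)
  refine ⟨?_, mul_nonpos_of_nonneg_of_nonpos hab (sub_nonpos.2 hx.2)⟩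
  calc -(b - a) ^ 2 = (b - a) * (a - b) := by ring
    _ ≤ (b - a) * (x - b) := by gcongr; exact hx.1

theorem stmt9_general (μ σ : ℝ) (hμσ : |μ| < σ) (φ : ℝ) (hφ : φ = √(σ ^ 2 - μ ^ 2)) (t : ℝ) :
    (∃ α β ω : ℝ, φ ≤ α ∧ α ≤ σ ∧ φ ≤ β ∧ β ≤ σ ∧ φ ≤ ω ∧ ω ≤ σ ∧
      cos (φ * t) - (μ / φ) * sin (φ * t)
        = t ^ 2 * (μ ^ 2 * (α - σ) / (σ + φ)) * cos (ω * t)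
          + t * (μ ^ 3 / (φ * (σ + φ))) * cos (β * t)
          + (t * (σ - φ) - μ / φ) * sin (σ * t)
          + cos (σ * t)
      ∧ μ ^ 2 * (α - σ) / (σ + φ) ∈ Icc (-(μ ^ 4) / (σ + φ) ^ 2) 0) ∧
    σ - φ = μ ^ 2 / (σ + φ) := by
  have hσ : 0 < σ := (abs_nonneg μ).trans_lt hμσ
  have hφ0 : 0 ≤ φ := hφ ▸ sqrt_nonneg _
  have hsq : φ ^ 2 = σ ^ 2 - μ ^ 2 :=
    hφ ▸ sq_sqrt (sub_nonneg.2 (sq_le_sq.2 (hμσ.le.trans (le_abs_self σ))))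
  have hdiff : σ - φ = μ ^ 2 / (σ + φ) :=
    sub_eq_sq_div_add_of_sq_eq_sq_sub_sq hsq (by positivity)
  have hle : φ ≤ σ := sub_nonneg.1 (hdiff ▸ by positivity)
  obtain ⟨α, hα, β, hβ, ω, hω, hdecomp⟩ :=
    exists_mem_uIcc_cos_mul_sub_const_mul_sin_eq φ σ t (μ / φ)
  rw [uIcc_of_le hle] at hα hβ hω
  have hquad : μ ^ 2 * (α - σ) / (σ + φ) = (σ - φ) * (α - σ) := by rw [hdiff]; ring
  have hlin : μ ^ 3 / (φ * (σ + φ)) = μ / φ * (σ - φ) := by rw [hdiff, div_mul_div_comm]; ring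
  have hbound : -(μ ^ 4) / (σ + φ) ^ 2 = -(σ - φ) ^ 2 := by rw [hdiff, div_pow]; ring
  refine ⟨⟨α, β, ω, hα.1, hα.2, hβ.1, hβ.2, hω.1, hω.2, ?_⟩, hdiff⟩
  rw [hquad, hlin, hbound]
  exact ⟨hdecomp, sub_mul_sub_mem_Icc_neg_sq hα⟩

/-- Mean-value-theorem decomposition of `g_n(t) = cos(φt) − (μ/φ)sin(φt)` in terms of the
unperturbed harmonics `sin(σt)`, `cos(σt)`, with intermediate points `α, β, ω ∈ [φ, σ]`
and coefficient bounds. -/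
theorem stmt9 (μ σ : ℝ) (hμ : 0 < μ) (hσ : μ < σ)
    (φ : ℝ) (hφ : φ = Real.sqrt (σ ^ 2 - μ ^ 2))
    (t : ℝ) (ht : 0 ≤ t) :
    (∃ α β ω : ℝ, φ ≤ α ∧ α ≤ σ ∧ φ ≤ β ∧ β ≤ σ ∧ φ ≤ ω ∧ ω ≤ σ ∧
      Real.cos (φ * t) - (μ / φ) * Real.sin (φ * t)
        = t ^ 2 * (μ ^ 2 * (α - σ) / (σ + φ)) * Real.cos (ω * t)
          + t * (μ ^ 3 / (φ * (σ + φ))) * Real.cos (β * t)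
          + (t * (σ - φ) - μ / φ) * Real.sin (σ * t)
          + Real.cos (σ * t)
      ∧ μ ^ 2 * (α - σ) / (σ + φ) ∈ Set.Icc (-(μ ^ 4) / (σ + φ) ^ 2) 0) ∧
    σ - φ = μ ^ 2 / (σ + φ) :=
  stmt9_general μ σ (by rwa [abs_of_pos hμ]) φ hφ t
end
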